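/- Let α ∈ (0,1) and ρ ∈ (0,1) with ρ̂ := 1 - ρ. Then for every x > 0, ∫_{-x}^{x} (Γ(1-αρ)/(Γ(1-α)Γ(αρ̂))) · (x+z)/(2|z|)^{α} · (x-|z|)^{αρ̂-1} (x+|z|)^{αρ-1} dz = 1; that is, the function appearing in Proposition 1.1 is a probability density on (-x, x). -/

import Mathlib

open MeasureTheory Real Set

/-!
The weight `x + z` is the sum of a constant and an odd function, so integrating it against an even
function over `(-x, x)` gives `2 * x` times the integral over `(0, x)`. With `p = 1 - α` and
`q = α * ρ̂`, so that `p + q = 1 - α * ρ`, the even factor is a multiple of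
`t ^ (p - 1) * (x - t) ^ (q - 1) * (x + t) ^ (-(p + q))`. Its exponents add up to `-2`, which makes
it a Beta integrand in the projective coordinate `u = 2 * t / (x + t)`.
-/

open ProbabilityTheory (beta beta_pos beta_eq_betaIntegralReal)

section EvenPart

variable {g : ℝ → ℝ} {r : ℝ}

lemma intervalIntegrable_comp_abs (hr : 0 ≤ r) (hg : IntervalIntegrable g volume 0 r) :
    IntervalIntegrable (fun z ↦ g |z|) volume (-r) r := by
  have h_right : IntervalIntegrable (fun z ↦ g |z|) volume 0 r :=
    hg.congr fun z hz ↦ by rw [abs_of_pos (uIoc_of_le hr ▸ hz).1]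
  have h_left : IntervalIntegrable (fun z ↦ g |z|) volume 0 (-r) := by
    rw [IntervalIntegrable.iff_comp_neg]
    simpa only [abs_neg, neg_zero, neg_neg] using h_right
  exact h_left.symm.trans h_right

lemma integral_comp_abs_neg_self (hr : 0 ≤ r) (hg : IntervalIntegrable g volume 0 r) :
    ∫ z in -r..r, g |z| = 2 * ∫ t in 0..r, g t := by
  have h_int := intervalIntegrable_comp_abs hr hg
  have h_mem : (0 : ℝ) ∈ uIcc (-r) r := by
    rw [uIcc_of_le (neg_le_self hr)]
    exact ⟨neg_nonpos.2 hr, hr⟩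
  have h_right : ∫ z in 0..r, g |z| = ∫ t in 0..r, g t :=
    intervalIntegral.integral_congr fun z hz ↦ by rw [abs_of_nonneg (uIcc_of_le hr ▸ hz).1]
  have h_left : ∫ z in -r..0, g |z| = ∫ z in 0..r, g |z| := by
    simpa only [abs_neg, neg_zero, neg_neg] using
      (intervalIntegral.integral_comp_neg (a := 0) (b := r) fun z ↦ g |z|).symm
  rw [← intervalIntegral.integral_add_adjacent_intervals
    (h_int.mono_set (uIcc_subset_uIcc_left h_mem))
    (h_int.mono_set (uIcc_subset_uIcc_right h_mem)), h_left, h_right, two_mul]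

lemma integral_mul_comp_abs_neg_self (g : ℝ → ℝ) (r : ℝ) : ∫ z in -r..r, z * g |z| = 0 := by
  have h_odd := intervalIntegral.integral_comp_neg (a := -r) (b := r) fun z ↦ z * g |z|
  simp only [abs_neg, neg_mul, neg_neg, intervalIntegral.integral_neg] at h_odd
  linarith

lemma integral_add_mul_comp_abs (c : ℝ) (hr : 0 ≤ r) (hg : IntervalIntegrable g volume 0 r) :
    ∫ z in -r..r, (c + z) * g |z| = 2 * c * ∫ t in 0..r, g t := by
  have h_int := intervalIntegrable_comp_abs hr hg
  simp only [add_mul]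
  have h_odd : IntervalIntegrable (fun z ↦ z * g |z|) volume (-r) r :=
    h_int.continuousOn_mul continuousOn_id
  rw [intervalIntegral.integral_add (h_int.const_mul c) h_odd,
    intervalIntegral.integral_const_mul, integral_comp_abs_neg_self hr hg,
    integral_mul_comp_abs_neg_self, add_zero, ← mul_assoc, mul_comm c]

end EvenPart

section BetaIntegral

variable {p q c r : ℝ}

lemma integral_rpow_mul_one_sub_rpow (hp : 0 < p) (hq : 0 < q) :
    ∫ u in (0 : ℝ)..1, u ^ (p - 1) * (1 - u) ^ (q - 1) = beta p q := by
  have h_ofReal : Complex.betaIntegral p q =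
      ∫ u in (0 : ℝ)..1, ((u ^ (p - 1) * (1 - u) ^ (q - 1) : ℝ) : ℂ) := by
    refine intervalIntegral.integral_congr fun u hu ↦ ?_
    rw [uIcc_of_le zero_le_one] at hu
    push_cast [Complex.ofReal_cpow hu.1, Complex.ofReal_cpow (sub_nonneg.2 hu.2)]
    rfl
  rw [beta_eq_betaIntegralReal p q hp hq, h_ofReal, intervalIntegral.integral_ofReal,
    Complex.ofReal_re]

lemma hasDerivAt_mul_div_mul_add {t : ℝ} (hr : r ≠ 0) (ht : c + t ≠ 0) :
    HasDerivAt (fun t ↦ (c + r) * t / (r * (c + t))) ((c + r) * c / (r * (c + t) ^ 2)) t := by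
  have h_num : HasDerivAt (fun t ↦ (c + r) * t) (c + r) t := by
    simpa using (hasDerivAt_id t).const_mul (c + r)
  have h_den : HasDerivAt (fun t ↦ r * (c + t)) r t := by
    simpa using ((hasDerivAt_id t).const_add c).const_mul r
  refine (h_num.div h_den (mul_ne_zero hr ht)).congr_deriv ?_
  field_simp
  ring

lemma beta_integrand_comp_mul_deriv {t : ℝ} (hc : 0 < c) (ht : t ∈ Ioo 0 r) :
    ((c + r) * t / (r * (c + t))) ^ (p - 1) * (1 - (c + r) * t / (r * (c + t))) ^ (q - 1) *
        ((c + r) * c / (r * (c + t) ^ 2)) =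
      c ^ q * (c + r) ^ p / r ^ (p + q - 1) *
        (t ^ (p - 1) * (r - t) ^ (q - 1) * (c + t) ^ (-(p + q))) := by
  obtain ⟨ht₀, htr⟩ := ht
  have hr : 0 < r := ht₀.trans htr
  have hrt : 0 < r - t := sub_pos.2 htr
  have h_one_sub : 1 - (c + r) * t / (r * (c + t)) = c * (r - t) / (r * (c + t)) := by
    field_simp
    ring
  rw [h_one_sub, div_rpow (by positivity) (by positivity), div_rpow (by positivity) (by positivity),
    mul_rpow (by positivity) ht₀.le, mul_rpow hc.le hrt.le,
    mul_rpow hr.le (by positivity), mul_rpow hr.le (by positivity),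
    rpow_neg (by positivity), rpow_add (by positivity : 0 < c + t),
    rpow_sub_one hr.ne' (p + q), rpow_add hr,
    rpow_sub_one hc.ne', rpow_sub_one (by positivity : c + r ≠ 0),
    rpow_sub_one hr.ne', rpow_sub_one hr.ne',
    rpow_sub_one (by positivity : c + t ≠ 0), rpow_sub_one (by positivity : c + t ≠ 0)]
  field_simp

-- The Möbius map `t ↦ (c + r) * t / (r * (c + t))` fixes `0` and sends `r` to `1` and `-c` to `∞`.
lemma integral_rpow_mul_sub_rpow_mul_add_rpow (hp : 0 < p) (hq : 0 < q) (hc : 0 < c) (hr : 0 < r) :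
    ∫ t in 0..r, t ^ (p - 1) * (r - t) ^ (q - 1) * (c + t) ^ (-(p + q)) =
      r ^ (p + q - 1) / (c ^ q * (c + r) ^ p) * beta p q := by
  have h_ne {t : ℝ} (ht : 0 ≤ t) : c + t ≠ 0 := by positivity
  have h_subst := intervalIntegral.integral_comp_mul_deriv_of_deriv_nonneg (a := 0) (b := r)
    (f := fun t ↦ (c + r) * t / (r * (c + t))) (f' := fun t ↦ (c + r) * c / (r * (c + t) ^ 2))
    (g := fun u ↦ u ^ (p - 1) * (1 - u) ^ (q - 1))
    (fun t ht ↦ (hasDerivAt_mul_div_mul_add hr.ne'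
      (h_ne (uIcc_of_le hr.le ▸ ht).1)).continuousAt.continuousWithinAt)
    (fun t ht ↦ hasDerivAt_mul_div_mul_add hr.ne' (h_ne (min_eq_left hr.le ▸ ht.1).le))
    (fun t _ ↦ by positivity)
  have h_zero : (c + r) * 0 / (r * (c + 0)) = 0 := by simp
  have h_one : (c + r) * r / (r * (c + r)) = 1 := by field_simp
  simp only [Function.comp_apply] at h_subst
  rw [h_zero, h_one, integral_rpow_mul_one_sub_rpow hp hq,
    intervalIntegral.integral_congr_Ioo_of_le hr.le fun t ht ↦ beta_integrand_comp_mul_deriv hc ht,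
    intervalIntegral.integral_const_mul] at h_subst
  rw [← h_subst]
  field_simp

lemma intervalIntegrable_rpow_mul_sub_rpow_mul_add_rpow
    (hp : 0 < p) (hq : 0 < q) (hc : 0 < c) (hr : 0 < r) :
    IntervalIntegrable (fun t ↦ t ^ (p - 1) * (r - t) ^ (q - 1) * (c + t) ^ (-(p + q)))
      volume 0 r := by
  apply intervalIntegral.intervalIntegrable_of_integral_ne_zero
  rw [integral_rpow_mul_sub_rpow_mul_add_rpow hp hq hc hr]
  have := beta_pos hp hq
  positivity

lemma integral_add_mul_abs_rpow_mul_sub_rpow_mul_add_rpow (hp : 0 < p) (hq : 0 < q) (hr : 0 < r) :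
    ∫ z in -r..r, (r + z) * (|z| ^ (p - 1) * (r - |z|) ^ (q - 1) * (r + |z|) ^ (-(p + q))) =
      2 ^ (1 - p) * beta p q := by
  rw [integral_add_mul_comp_abs r hr.le
      (intervalIntegrable_rpow_mul_sub_rpow_mul_add_rpow hp hq hr hr),
    integral_rpow_mul_sub_rpow_mul_add_rpow hp hq hr hr, ← two_mul, mul_rpow zero_le_two hr.le,
    rpow_sub_one hr.ne', rpow_add hr, rpow_sub two_pos, rpow_one]
  field_simp

end BetaIntegral

theorem stmt_5_general {a b x : ℝ} (ha : 0 < a) (hab : a + b < 1) (hx : 0 < x) :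
    (∫ z in Ioo (-x) x,
        (Real.Gamma (1 - b) / (Real.Gamma (1 - (a + b)) * Real.Gamma a)) *
          ((x + z) / (2 * |z|) ^ (a + b)) *
          (x - |z|) ^ (a - 1) * (x + |z|) ^ (b - 1)) = 1 := by
  have hp : 0 < 1 - (a + b) := sub_pos.2 hab
  have h_sum : 1 - (a + b) + a = 1 - b := by ring
  have h_const : Real.Gamma (1 - b) / (Real.Gamma (1 - (a + b)) * Real.Gamma a) =
      (beta (1 - (a + b)) a)⁻¹ := by
    rw [beta, inv_div, h_sum]
  have h_integrand (z : ℝ) : (beta (1 - (a + b)) a)⁻¹ * ((x + z) / (2 * |z|) ^ (a + b)) *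
      (x - |z|) ^ (a - 1) * (x + |z|) ^ (b - 1) =
        ((beta (1 - (a + b)) a)⁻¹ / 2 ^ (a + b)) * ((x + z) * (|z| ^ (1 - (a + b) - 1) *
          (x - |z|) ^ (a - 1) * (x + |z|) ^ (-(1 - (a + b) + a)))) := by
    rw [h_sum, neg_sub, sub_sub_cancel_left, rpow_neg (abs_nonneg z),
      mul_rpow zero_le_two (abs_nonneg z)]
    ring
  simp only [h_const, h_integrand]
  rw [← integral_Ioc_eq_integral_Ioo, ← intervalIntegral.integral_of_le (neg_le_self hx.le),
    intervalIntegral.integral_const_mul,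
    integral_add_mul_abs_rpow_mul_sub_rpow_mul_add_rpow hp ha hx, sub_sub_cancel]
  have h_beta := beta_pos hp ha
  field_simp

theorem stmt_5 (α ρ : ℝ) (hα : α ∈ Ioo (0:ℝ) 1) (hρ : ρ ∈ Ioo (0:ℝ) 1)
    (x : ℝ) (hx : 0 < x) :
    (∫ z in Ioo (-x) x,
        (Real.Gamma (1 - α * ρ) / (Real.Gamma (1 - α) * Real.Gamma (α * (1 - ρ)))) *
          ((x + z) / (2 * |z|) ^ α) *
          (x - |z|) ^ (α * (1 - ρ) - 1) * (x + |z|) ^ (α * ρ - 1)) = 1 := by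
  have h_sum : α * (1 - ρ) + α * ρ = α := by ring
  simpa only [h_sum] using
    stmt_5_general (mul_pos hα.1 (sub_pos.2 hρ.2)) (h_sum.trans_lt hα.2) hx
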